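/- arXiv:0705.4618 — 6 statements merged into one kernel-verified Lean document; each statement's English description precedes it below -/
import Mathlib

section
/- Let G = (𝒩, w) be a closed octagonal graph. Define w_S : 𝒩 × 𝒩 → ℚ∞ by w_S(i,j) = min{ w(i,j), w(i,ī)/2 + w(j̄,j)/2 }. Then w_S is the strong closure of G: w_S is a strongly closed octagonal graph with w_S ⊴ w, and every strongly closed octagonal graph w′ with w′ ⊴ w satisfies w′ ⊴ w_S. -/
/-- Extended rationals: ℚ ∪ {+∞}. -/
abbrev Qinf := WithTop ℚ

/-- Weight of a path (list of nodes): sum of the weights of its arcs. -/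
def pathWeight {N : Type*} (w : N → N → Qinf) : List N → Qinf
  | [] => 0
  | [_] => 0
  | a :: b :: l => w a b + pathWeight w (b :: l)

/-- A proper cycle: at least two arcs, first node equals last node,
    consecutive nodes distinct. -/
def IsProperCycle {N : Type*} (l : List N) : Prop :=
  3 ≤ l.length ∧ l.head? = l.getLast? ∧ l.Chain' (· ≠ ·)

/-- A graph is consistent if it has no proper cycle of negative weight. -/
def Consistent {N : Type*} (w : N → N → Qinf) : Prop :=
  ∀ l : List N, IsProperCycle l → 0 ≤ pathWeight w l

/-- A consistent graph is closed if self-loops have weight 0 and the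
    triangle inequality holds. -/
def ClosedG {N : Type*} (w : N → N → Qinf) : Prop :=
  Consistent w ∧ (∀ i, w i i = 0) ∧ ∀ i j k, w i j ≤ w i k + w k j

/-- The "bar" involution on nodes: ī = i+1 for even i, ī = i-1 for odd i. -/
def bar {n : ℕ} (i : Fin (2 * n)) : Fin (2 * n) :=
  if _h : i.val % 2 = 0 then ⟨i.val + 1, by have := i.isLt; omega⟩
  else ⟨i.val - 1, by have := i.isLt; omega⟩

/-- Coherence: w(i,j) = w(j̄,ī). -/
def Coherent {n : ℕ} (w : Fin (2 * n) → Fin (2 * n) → Qinf) : Prop :=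
  ∀ i j, w i j = w (bar j) (bar i)

/-- An octagonal graph: consistent and coherent. -/
def Octagonal {n : ℕ} (w : Fin (2 * n) → Fin (2 * n) → Qinf) : Prop :=
  Consistent w ∧ Coherent w

/-- Pointwise order on graphs. -/
def GLe {n : ℕ} (w₁ w₂ : Fin (2 * n) → Fin (2 * n) → Qinf) : Prop :=
  ∀ i j, w₁ i j ≤ w₂ i j

/-- Halving on ℚ∞ (with +∞/2 = +∞). -/
def half (x : Qinf) : Qinf := x.map (fun q => q / 2)

/-- Floored halving on ℚ∞ (with ⌊+∞/2⌋ = +∞). -/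
def fhalf (x : Qinf) : Qinf := x.map (fun q => ((⌊q / 2⌋ : ℤ) : ℚ))

/-- Integer weights: every weight is an integer or +∞. -/
def IntWeights {n : ℕ} (w : Fin (2 * n) → Fin (2 * n) → Qinf) : Prop :=
  ∀ i j, w i j = ⊤ ∨ ∃ d : ℤ, w i j = ((d : ℚ) : Qinf)

/-- A strongly closed octagonal graph. -/
def StronglyClosed {n : ℕ} (w : Fin (2 * n) → Fin (2 * n) → Qinf) : Prop :=
  Octagonal w ∧ ClosedG w ∧ ∀ i j, 2 * w i j ≤ w i (bar i) + w (bar j) j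

/-- A tightly closed integer octagonal graph. -/
def TightlyClosed {n : ℕ} (w : Fin (2 * n) → Fin (2 * n) → Qinf) : Prop :=
  IntWeights w ∧ StronglyClosed w ∧
    ∀ i, w i (bar i) = ⊤ ∨ ∃ d : ℤ, w i (bar i) = (((2 * d : ℤ) : ℚ) : Qinf)

/-!
Write `ī = σ i` for an involution `σ`, and let `p i = w(i, ī)/2` and `q j = w(j̄, j)/2`. In a closed
coherent graph, the path `i → k → k̄ → ī`, whose first and last arcs have the same weight, gives
`p i ≤ w(i, k) + p k`. Reversing it gives `q j ≤ q k + w(k, j)`, and the path `k → k̄ → k` gives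
`0 ≤ p k + q k`. Hence one may add a virtual hub reached from each `i` by an arc of weight `p i` and
left towards each `j` by an arc of weight `q j`: in this larger graph the shortest-path distance
from `i` to `j` is `w_S(i, j) = min (w(i, j)) (p i + q j)`, so `w_S` satisfies the triangle
inequality. It is maximal because strong coherence of `w'` says
`w'(i, j) ≤ w'(i, ī)/2 + w'(j̄, j)/2`.
-/

theorem half_mono : Monotone half :=
  Monotone.withTop_map fun _ _ h => div_le_div_of_nonneg_right h zero_le_two

theorem half_add (x y : Qinf) : half (x + y) = half x + half y := by
  induction x using WithTop.recTopCoe with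
  | top => simp [half]
  | coe a =>
    induction y using WithTop.recTopCoe with
    | top => simp [half]
    | coe b => exact congrArg WithTop.some (add_div a b 2)

theorem half_add_half (x : Qinf) : half x + half x = x := by
  induction x using WithTop.recTopCoe with
  | top => rfl
  | coe a => exact congrArg WithTop.some (add_halves a)

theorem two_mul_le_iff_le_half {x y : Qinf} : 2 * x ≤ y ↔ x ≤ half y := by
  induction y using WithTop.recTopCoe with
  | top => simp [half]
  | coe b =>
    induction x using WithTop.recTopCoe with
    | top => simp [half, WithTop.mul_top (two_ne_zero : (2 : Qinf) ≠ 0)]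
    | coe a =>
      change ((2 * a : ℚ) : Qinf) ≤ b ↔ (a : Qinf) ≤ ((b / 2 : ℚ) : Qinf)
      rw [WithTop.coe_le_coe, WithTop.coe_le_coe, le_div_iff₀' zero_lt_two]

theorem min_add_le_min_add_add_min_add {N M : Type*} [AddCommMonoid M] [LinearOrder M]
    [IsOrderedAddMonoid M] {w : N → N → M} {p q : N → M}
    (hw : ∀ i j k, w i j ≤ w i k + w k j) (hp : ∀ i k, p i ≤ w i k + p k)
    (hq : ∀ k j, q j ≤ q k + w k j) (hpq : ∀ k, 0 ≤ p k + q k) (i j k : N) :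
    min (w i j) (p i + q j) ≤ min (w i k) (p i + q k) + min (w k j) (p k + q j) := by
  have via_hub_twice : p i + q j ≤ p i + q k + (p k + q j) :=
    calc p i + q j ≤ p i + q j + (p k + q k) := le_add_of_nonneg_right (hpq k)
      _ = p i + q k + (p k + q j) := by ac_rfl
  have via_hub_first : p i + q j ≤ p i + q k + w k j := by
    rw [add_assoc]
    gcongr
    exact hq k j
  have via_hub_last : p i + q j ≤ w i k + (p k + q j) := by
    rw [← add_assoc]
    gcongr
    exact hp i k
  simp only [min_add, add_min, le_min_iff]
  exact ⟨⟨min_le_of_left_le (hw i j k), min_le_of_right_le via_hub_first⟩,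
    min_le_of_right_le via_hub_last, min_le_of_right_le via_hub_twice⟩

section Graph

variable {N : Type*} {w : N → N → Qinf}

theorem le_pathWeight (h0 : ∀ i, w i i = 0) (ht : ∀ i j k, w i j ≤ w i k + w k j)
    {a b : N} {l : List N} (hb : (a :: l).getLast? = some b) :
    w a b ≤ pathWeight w (a :: l) := by
  induction l generalizing a with
  | nil =>
    obtain rfl : a = b := by simpa using hb
    exact (h0 a).le
  | cons c l ih =>
    rw [List.getLast?_cons_cons] at hb
    exact (ht a b c).trans (add_le_add_right (ih hb) (w a c))

theorem closedG_iff : ClosedG w ↔ (∀ i, w i i = 0) ∧ ∀ i j k, w i j ≤ w i k + w k j := by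
  refine ⟨And.right, fun h => ⟨?_, h⟩⟩
  rintro (_ | ⟨a, l⟩) ⟨hlen, hends, -⟩
  · simp at hlen
  · exact (h.1 a).ge.trans (le_pathWeight h.1 h.2 hends.symm)

theorem ClosedG.zero_le_half_add_half (hcl : ClosedG w) (i j : N) :
    0 ≤ half (w i j) + half (w j i) := by
  rw [← half_add, ← two_mul_le_iff_le_half, mul_zero]
  exact (hcl.2.1 i).ge.trans (hcl.2.2 i i j)

/-- Coherence with respect to an arbitrary map `σ` in place of `bar`. -/
def IsCoherent (σ : N → N) (w : N → N → Qinf) : Prop :=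
  ∀ i j, w i j = w (σ j) (σ i)

/-- Strong closedness with respect to an arbitrary map `σ` in place of `bar`, with its conjuncts
arranged so that it unfolds to `StronglyClosed` when `σ` is `bar`. -/
def IsStronglyClosed (σ : N → N) (w : N → N → Qinf) : Prop :=
  (Consistent w ∧ IsCoherent σ w) ∧ ClosedG w ∧ ∀ i j, 2 * w i j ≤ w i (σ i) + w (σ j) j

/-- The graph `w_S` obtained from `w` by one application of the strong-coherence rule, with `σ` in
place of `bar`; it is the strong closure of `w` when `σ` is an
involution and `w` is closed and coherent. -/
def strongClosure (σ : N → N) (w : N → N → Qinf) (i j : N) : Qinf :=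
  min (w i j) (half (w i (σ i)) + half (w (σ j) j))

variable {σ : N → N}

theorem strongClosure_le : strongClosure σ w ≤ w :=
  fun _ _ => min_le_left _ _

theorem le_strongClosure {w' : N → N → Qinf}
    (hstrong : ∀ i j, 2 * w' i j ≤ w' i (σ i) + w' (σ j) j) (hle : w' ≤ w) :
    w' ≤ strongClosure σ w := by
  refine fun i j => le_min (hle i j) ?_
  rw [← half_add]
  exact two_mul_le_iff_le_half.1 ((hstrong i j).trans (add_le_add (hle _ _) (hle _ _)))

theorem strongClosure_apply_map (hσ : Function.Involutive σ) (i : N) :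
    strongClosure σ w i (σ i) = w i (σ i) := by
  rw [strongClosure, hσ, half_add_half, min_self]

theorem two_mul_strongClosure_le (hσ : Function.Involutive σ) (i j : N) :
    2 * strongClosure σ w i j ≤ strongClosure σ w i (σ i) + strongClosure σ w (σ j) j := by
  have hj : strongClosure σ w (σ j) j = w (σ j) j := by
    simpa only [hσ j] using strongClosure_apply_map (w := w) hσ (σ j)
  rw [strongClosure_apply_map hσ, hj, two_mul_le_iff_le_half, half_add]
  exact min_le_right _ _

theorem isCoherent_strongClosure (hσ : Function.Involutive σ) (hco : IsCoherent σ w) :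
    IsCoherent σ (strongClosure σ w) := fun i j => by
  simp only [strongClosure, hσ i, hσ j, ← hco i j, add_comm]

theorem IsCoherent.half_le_add_half (hco : IsCoherent σ w)
    (ht : ∀ i j k, w i j ≤ w i k + w k j) (i k : N) :
    half (w i (σ i)) ≤ w i k + half (w k (σ k)) := by
  have through : w i (σ i) ≤ w i k + w i k + w k (σ k) :=
    calc w i (σ i) ≤ w i k + (w k (σ k) + w (σ k) (σ i)) :=
          (ht _ _ k).trans (add_le_add_right (ht _ _ (σ k)) _)
      _ = w i k + w i k + w k (σ k) := by rw [← hco i k]; ac_rfl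
  calc half (w i (σ i)) ≤ half (w i k + w i k + w k (σ k)) := half_mono through
    _ = w i k + half (w k (σ k)) := by rw [half_add, half_add, half_add_half]

theorem IsCoherent.half_le_half_add (hσ : Function.Involutive σ) (hco : IsCoherent σ w)
    (ht : ∀ i j k, w i j ≤ w i k + w k j) (k j : N) :
    half (w (σ j) j) ≤ half (w (σ k) k) + w k j := by
  have reversed := hco.half_le_add_half ht (σ j) (σ k)
  rwa [hσ, hσ, ← hco k j, add_comm] at reversed

theorem closedG_strongClosure (hσ : Function.Involutive σ) (hcl : ClosedG w)
    (hco : IsCoherent σ w) : ClosedG (strongClosure σ w) := by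
  obtain ⟨h0, ht⟩ := closedG_iff.1 hcl
  refine closedG_iff.2 ⟨fun i => ?_, ?_⟩
  · rw [strongClosure, h0, min_eq_left (hcl.zero_le_half_add_half i (σ i))]
  · exact min_add_le_min_add_add_min_add ht (hco.half_le_add_half ht)
      (hco.half_le_half_add hσ ht) fun k => hcl.zero_le_half_add_half k (σ k)

theorem strong_closure_of_closed_octagonal_general (hσ : Function.Involutive σ)
    (hcl : ClosedG w) (hco : IsCoherent σ w) :
    IsGreatest {w' | IsStronglyClosed σ w' ∧ w' ≤ w} (strongClosure σ w) := by
  have hclS : ClosedG (strongClosure σ w) := closedG_strongClosure hσ hcl hco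
  have hcoS : IsCoherent σ (strongClosure σ w) := isCoherent_strongClosure hσ hco
  exact ⟨⟨⟨⟨hclS.1, hcoS⟩, hclS, two_mul_strongClosure_le hσ⟩, strongClosure_le⟩,
    fun _ ⟨hsc, hle⟩ => le_strongClosure hsc.2.2 hle⟩

end Graph

theorem bar_involutive {n : ℕ} : Function.Involutive (bar (n := n)) := by
  intro i
  ext
  simp only [bar]
  grind

/-- For a closed octagonal graph, a single application of the
    strong-coherence inference rule yields the strong closure. -/
theorem strong_closure_of_closed_octagonal
    {n : ℕ} (hn : 1 ≤ n) (w : Fin (2 * n) → Fin (2 * n) → Qinf)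
    (hoct : Octagonal w) (hcl : ClosedG w)
    (wS : Fin (2 * n) → Fin (2 * n) → Qinf)
    (hwS : ∀ i j, wS i j = min (w i j) (half (w i (bar i)) + half (w (bar j) j))) :
    StronglyClosed wS ∧ GLe wS w ∧
      ∀ w' : Fin (2 * n) → Fin (2 * n) → Qinf,
        StronglyClosed w' → GLe w' w → GLe w' wS := by
  obtain rfl : wS = strongClosure bar w := funext₂ hwS
  obtain ⟨⟨hsc, hle⟩, hmax⟩ :=
    strong_closure_of_closed_octagonal_general bar_involutive hcl hoct.2
  exact ⟨hsc, hle, fun w' hsc' hle' => hmax ⟨hsc', hle'⟩⟩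
end

section
/- Let G = (𝒩, w) be a closed integer octagonal graph. Define w_T : 𝒩 × 𝒩 → ℚ∞ by w_T(i,j) = min{ w(i,j), ⌊w(i,ī)/2⌋ + ⌊w(j̄,j)/2⌋ }. If w_T is an octagonal graph (i.e., consistent), then w_T is the tight closure of G: w_T is a tightly closed integer octagonal graph with w_T ⊴ w, and every tightly closed integer octagonal graph w′ with w′ ⊴ w satisfies w′ ⊴ w_T. -/
/-!
Write `f i = ⌊w(i,ī)/2⌋` and `g j = ⌊w(j̄,j)/2⌋`, so that `w_T(i,j) = min (w(i,j)) (f i + g j)`.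
Closedness, coherence and integrality of `w` make `f` and `g` potentials: halving
`w(i,ī) ≤ w(i,k) + w(k,k̄) + w(k̄,ī) = 2 w(i,k) + w(k,k̄)` gives `f i ≤ w(i,k) + f k`, and dually
`g j ≤ g k + w(k,j)`. The triangle inequality for `w_T` then needs, besides these, only
`0 ≤ g k + f k`, which is nonnegativity of the two-arc cycle `k, k̄, k` of `w_T`; consistency
of `w_T` on longer cycles is a consequence. Maximality holds because a tightly closed graph is its
own tightening and tightening is monotone.
-/

section Cycles

variable {N : Type*} {w : N → N → Qinf}

theorem weight_head_getLast_le_pathWeight (hdiag : ∀ i, w i i ≤ 0)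
    (htri : ∀ i j k, w i j ≤ w i k + w k j) :
    ∀ (l : List N) (hl : l ≠ []), w (l.head hl) (l.getLast hl) ≤ pathWeight w l
  | [a], _ => hdiag a
  | a :: b :: l, _ => by
    rw [List.getLast_cons (List.cons_ne_nil b l)]
    exact (htri a _ b).trans <|
      add_le_add_right (weight_head_getLast_le_pathWeight hdiag htri (b :: l) _) (w a b)

theorem consistent_of_triangle (hdiag : ∀ i, w i i = 0)
    (htri : ∀ i j k, w i j ≤ w i k + w k j) : Consistent w := by
  rintro l ⟨hlen, hends, -⟩
  have hl : l ≠ [] := by rintro rfl; simp at hlen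
  have hends : l.head hl = l.getLast hl := by
    rwa [List.head?_eq_some_head hl, List.getLast?_eq_some_getLast hl, Option.some_inj] at hends
  calc 0 = w (l.head hl) (l.getLast hl) := by rw [← hends, hdiag]
    _ ≤ pathWeight w l := weight_head_getLast_le_pathWeight (fun i => (hdiag i).le) htri l hl

theorem Consistent.add_nonneg_of_ne (hw : Consistent w) {i j : N} (hij : i ≠ j) :
    0 ≤ w i j + w j i := by
  have hcycle : IsProperCycle [i, j, i] :=
    ⟨by simp, by simp, show List.IsChain _ _ by simp [hij, hij.symm]⟩
  simpa [pathWeight] using hw _ hcycle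

end Cycles

theorem min_add_triangle {N M : Type*} [AddMonoid M] [LinearOrder M] [AddLeftMono M]
    [AddRightMono M] {d : N → N → M} {f g : N → M} (hd : ∀ i j k, d i j ≤ d i k + d k j)
    (hf : ∀ i k, f i ≤ d i k + f k) (hg : ∀ k j, g j ≤ g k + d k j) (hgf : ∀ k, 0 ≤ g k + f k)
    (i j k : N) :
    min (d i j) (f i + g j) ≤ min (d i k) (f i + g k) + min (d k j) (f k + g j) := by
  rcases min_choice (d i k) (f i + g k) with hik | hik <;>
    rcases min_choice (d k j) (f k + g j) with hkj | hkj <;> rw [hik, hkj]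
  · exact min_le_of_left_le (hd i j k)
  · refine min_le_of_right_le ?_
    calc f i + g j ≤ (d i k + f k) + g j := by gcongr; exact hf i k
      _ = d i k + (f k + g j) := add_assoc _ _ _
  · refine min_le_of_right_le ?_
    calc f i + g j ≤ f i + (g k + d k j) := by gcongr; exact hg k j
      _ = f i + g k + d k j := (add_assoc _ _ _).symm
  · refine min_le_of_right_le ?_
    calc f i + g j = f i + (0 + g j) := by rw [zero_add]
      _ ≤ f i + ((g k + f k) + g j) := by gcongr; exact hgf k
      _ = f i + g k + (f k + g j) := by simp only [add_assoc]

section ExtendedRationals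

theorem two_mul_eq_add_self (x : Qinf) : 2 * x = x + x := by
  induction x using WithTop.recTopCoe with
  | top => exact WithTop.mul_top two_ne_zero
  | coe q => exact congrArg _ (two_mul q)

theorem le_of_add_self_le_add_self {α : Type*} [LinearOrder α] [Add α] [AddLeftStrictMono α]
    [AddRightStrictMono α] {x y : WithTop α} (h : x + x ≤ y + y) : x ≤ y :=
  le_of_not_gt fun hlt => (WithTop.add_lt_add hlt hlt).not_ge h

/-- The elements of `ℤ ∪ {+∞}` inside `ℚ ∪ {+∞}`; `IntWeights w` says that every `w i j` is one. -/
def IsIntOrTop (x : Qinf) : Prop := x = ⊤ ∨ ∃ d : ℤ, x = ((d : ℚ) : Qinf)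

theorem IsIntOrTop.add {x y : Qinf} (hx : IsIntOrTop x) (hy : IsIntOrTop y) :
    IsIntOrTop (x + y) := by
  rcases hx with rfl | ⟨d, rfl⟩
  · exact .inl (top_add y)
  rcases hy with rfl | ⟨e, rfl⟩
  · exact .inl (add_top _)
  · exact .inr ⟨d + e, by push_cast; rfl⟩

theorem IsIntOrTop.min {x y : Qinf} (hx : IsIntOrTop x) (hy : IsIntOrTop y) :
    IsIntOrTop (min x y) := by
  rcases min_choice x y with h | h <;> rwa [h]

theorem IsIntOrTop.add_self_even {x : Qinf} (hx : IsIntOrTop x) :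
    x + x = ⊤ ∨ ∃ d : ℤ, x + x = (((2 * d : ℤ) : ℚ) : Qinf) := by
  rcases hx with rfl | ⟨d, rfl⟩
  · exact .inl (top_add ⊤)
  · exact .inr ⟨d, by rw [two_mul]; push_cast; rfl⟩

theorem fhalf_top : fhalf ⊤ = ⊤ := rfl

theorem fhalf_coe (q : ℚ) : fhalf (q : Qinf) = ((⌊q / 2⌋ : ℚ) : Qinf) := rfl

theorem isIntOrTop_fhalf (x : Qinf) : IsIntOrTop (fhalf x) := by
  induction x using WithTop.recTopCoe with
  | top => exact .inl fhalf_top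
  | coe q => exact .inr ⟨_, fhalf_coe q⟩

theorem fhalf_mono : Monotone fhalf :=
  WithTop.monotone_map_iff.2 fun p q (hpq : p ≤ q) => by gcongr

theorem fhalf_add_self_le (x : Qinf) : fhalf x + fhalf x ≤ x := by
  induction x using WithTop.recTopCoe with
  | top => exact le_top
  | coe q =>
    rw [fhalf_coe]
    norm_cast
    push_cast
    linarith [Int.floor_le (q / 2)]

theorem fhalf_add_self_add {x : Qinf} (hx : IsIntOrTop x) (y : Qinf) :
    fhalf (x + x + y) = x + fhalf y := by
  rcases hx with rfl | ⟨d, rfl⟩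
  · rfl
  induction y using WithTop.recTopCoe with
  | top => rfl
  | coe q =>
    have hfloor : ⌊((d : ℚ) + d + q) / 2⌋ = d + ⌊q / 2⌋ := by
      rw [← Int.floor_intCast_add]
      congr 1
      ring
    norm_cast at hfloor ⊢
    rw [fhalf_coe, fhalf_coe, hfloor]
    norm_cast

theorem fhalf_add_self_of_even {x : Qinf}
    (hx : x = ⊤ ∨ ∃ d : ℤ, x = (((2 * d : ℤ) : ℚ) : Qinf)) : fhalf x + fhalf x = x := by
  rcases hx with rfl | ⟨d, rfl⟩
  · rfl
  · have hfloor : ⌊((2 * d : ℤ) : ℚ) / 2⌋ = d := by simp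
    rw [fhalf_coe, hfloor, two_mul]
    norm_cast

end ExtendedRationals

section Tightening

variable {n : ℕ} {w : Fin (2 * n) → Fin (2 * n) → Qinf}

theorem bar_bar (i : Fin (2 * n)) : bar (bar i) = i := by
  grind [bar]

theorem ne_bar (i : Fin (2 * n)) : i ≠ bar i := by
  grind [bar]

/-- The graph `w_T` of the paper: one application of tightening and strong coherence to `w`. -/
def tighten (w : Fin (2 * n) → Fin (2 * n) → Qinf) (i j : Fin (2 * n)) : Qinf :=
  min (w i j) (fhalf (w i (bar i)) + fhalf (w (bar j) j))

theorem tighten_gle (w : Fin (2 * n) → Fin (2 * n) → Qinf) : GLe (tighten w) w :=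
  fun _ _ => min_le_left _ _

theorem tighten_mono {w₁ w₂ : Fin (2 * n) → Fin (2 * n) → Qinf} (h : GLe w₁ w₂) :
    GLe (tighten w₁) (tighten w₂) :=
  fun i j => min_le_min (h i j) (add_le_add (fhalf_mono (h _ _)) (fhalf_mono (h _ _)))

theorem tighten_self_bar (w : Fin (2 * n) → Fin (2 * n) → Qinf) (i : Fin (2 * n)) :
    tighten w i (bar i) = fhalf (w i (bar i)) + fhalf (w i (bar i)) := by
  rw [tighten, bar_bar, min_eq_right (fhalf_add_self_le _)]

theorem tighten_bar_self (w : Fin (2 * n) → Fin (2 * n) → Qinf) (j : Fin (2 * n)) :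
    tighten w (bar j) j = fhalf (w (bar j) j) + fhalf (w (bar j) j) := by
  simpa only [bar_bar] using tighten_self_bar w (bar j)

theorem intWeights_tighten (hint : IntWeights w) : IntWeights (tighten w) :=
  fun i j => IsIntOrTop.min (hint i j) ((isIntOrTop_fhalf _).add (isIntOrTop_fhalf _))

theorem coherent_tighten (hcoh : Coherent w) : Coherent (tighten w) := by
  intro i j
  simp only [tighten, bar_bar]
  rw [hcoh i j, add_comm]

theorem two_mul_tighten_le (w : Fin (2 * n) → Fin (2 * n) → Qinf) (i j : Fin (2 * n)) :
    2 * tighten w i j ≤ tighten w i (bar i) + tighten w (bar j) j := by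
  have hle : tighten w i j ≤ fhalf (w i (bar i)) + fhalf (w (bar j) j) := min_le_right _ _
  rw [two_mul_eq_add_self, tighten_self_bar, tighten_bar_self, add_add_add_comm]
  exact add_le_add hle hle

theorem fhalf_self_bar_le (hcoh : Coherent w) (hint : IntWeights w)
    (htri : ∀ i j k, w i j ≤ w i k + w k j) (i k : Fin (2 * n)) :
    fhalf (w i (bar i)) ≤ w i k + fhalf (w k (bar k)) := by
  have hpath : w i (bar i) ≤ w i k + w i k + w k (bar k) :=
    calc w i (bar i) ≤ w i k + w k (bar i) := htri _ _ _
      _ ≤ w i k + (w k (bar k) + w (bar k) (bar i)) := by gcongr; exact htri _ _ _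
      _ = w i k + w i k + w k (bar k) := by rw [← hcoh i k, add_comm (w k _), add_assoc]
  exact (fhalf_mono hpath).trans_eq (fhalf_add_self_add (hint i k) _)

theorem fhalf_bar_self_le (hcoh : Coherent w) (hint : IntWeights w)
    (htri : ∀ i j k, w i j ≤ w i k + w k j) (k j : Fin (2 * n)) :
    fhalf (w (bar j) j) ≤ fhalf (w (bar k) k) + w k j := by
  simpa only [bar_bar, ← hcoh k j, add_comm] using
    fhalf_self_bar_le hcoh hint htri (bar j) (bar k)

theorem closedG_tighten (hcoh : Coherent w) (hint : IntWeights w) (hcl : ClosedG w)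
    (hcycle : ∀ i, 0 ≤ fhalf (w i (bar i)) + fhalf (w (bar i) i)) : ClosedG (tighten w) := by
  obtain ⟨-, hdiag, htri⟩ := hcl
  have hdiagT : ∀ i, tighten w i i = 0 := fun i => by
    rw [tighten, hdiag, min_eq_left (hcycle i)]
  have htriT : ∀ i j k, tighten w i j ≤ tighten w i k + tighten w k j :=
    min_add_triangle htri (fhalf_self_bar_le hcoh hint htri) (fhalf_bar_self_le hcoh hint htri)
      fun k => (hcycle k).trans_eq (add_comm _ _)
  exact ⟨consistent_of_triangle hdiagT htriT, hdiagT, htriT⟩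

theorem tightlyClosed_tighten (hcoh : Coherent w) (hint : IntWeights w) (hcl : ClosedG w)
    (hcycle : ∀ i, 0 ≤ fhalf (w i (bar i)) + fhalf (w (bar i) i)) :
    TightlyClosed (tighten w) := by
  have hclT : ClosedG (tighten w) := closedG_tighten hcoh hint hcl hcycle
  refine ⟨intWeights_tighten hint, ⟨⟨hclT.1, coherent_tighten hcoh⟩, hclT, two_mul_tighten_le w⟩,
    fun i => ?_⟩
  rw [tighten_self_bar]
  exact (isIntOrTop_fhalf _).add_self_even

theorem TightlyClosed.gle_tighten (hw : TightlyClosed w) : GLe w (tighten w) := by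
  obtain ⟨-, ⟨-, -, hstrong⟩, heven⟩ := hw
  intro i j
  have heven' : fhalf (w (bar j) j) + fhalf (w (bar j) j) = w (bar j) j :=
    fhalf_add_self_of_even (by simpa only [bar_bar] using heven (bar j))
  refine le_min le_rfl (le_of_add_self_le_add_self ?_)
  rw [add_add_add_comm, fhalf_add_self_of_even (heven i), heven', ← two_mul_eq_add_self]
  exact hstrong i j

theorem fhalf_cycle_nonneg_of_consistent_tighten (hT : Consistent (tighten w)) (i : Fin (2 * n)) :
    0 ≤ fhalf (w i (bar i)) + fhalf (w (bar i) i) := by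
  have hcycle : 0 ≤ tighten w i (bar i) + tighten w (bar i) i := hT.add_nonneg_of_ne (ne_bar i)
  rw [tighten_self_bar, tighten_bar_self, add_add_add_comm] at hcycle
  exact le_of_add_self_le_add_self (by rwa [add_zero])

end Tightening

theorem tight_closure_of_closed_integer_octagonal_general
    {n : ℕ} {w : Fin (2 * n) → Fin (2 * n) → Qinf}
    (hcoh : Coherent w) (hint : IntWeights w) (hcl : ClosedG w)
    (hcycle : ∀ i, 0 ≤ fhalf (w i (bar i)) + fhalf (w (bar i) i)) :
    TightlyClosed (tighten w) ∧ GLe (tighten w) w ∧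
      ∀ w' : Fin (2 * n) → Fin (2 * n) → Qinf,
        TightlyClosed w' → GLe w' w → GLe w' (tighten w) :=
  ⟨tightlyClosed_tighten hcoh hint hcl hcycle, tighten_gle w, fun _ hw' hle i j =>
    (hw'.gle_tighten i j).trans (tighten_mono hle i j)⟩

/-- For a closed integer octagonal graph, a single application of
    the tightening/strong-coherence rule yields the tight closure, provided the
    result is an octagonal graph. -/
theorem tight_closure_of_closed_integer_octagonal
    {n : ℕ} (hn : 1 ≤ n) (w : Fin (2 * n) → Fin (2 * n) → Qinf)
    (hoct : Octagonal w) (hint : IntWeights w) (hcl : ClosedG w)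
    (wT : Fin (2 * n) → Fin (2 * n) → Qinf)
    (hwT : ∀ i j, wT i j = min (w i j) (fhalf (w i (bar i)) + fhalf (w (bar j) j)))
    (hTo : Octagonal wT) :
    TightlyClosed wT ∧ GLe wT w ∧
      ∀ w' : Fin (2 * n) → Fin (2 * n) → Qinf,
        TightlyClosed w' → GLe w' w → GLe w' wT := by
  obtain rfl : wT = tighten w := funext₂ hwT
  exact tight_closure_of_closed_integer_octagonal_general hoct.2 hint hcl
    (fhalf_cycle_nonneg_of_consistent_tighten hTo.1)
end

section
/- Let G = (𝒩, w) be an octagonal graph and let w★ be its shortest-path closure, i.e., the pointwise supremum of all closed graphs w′ with w′ ⊴ w. If (z₁, z₂) is an arc of w★ (i.e., w★(z₁,z₂) < +∞), then there exists a simple path π from z₁ to z₂ in G such that w★(z₁, z₂) = w(π). -/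
/-!
A closed graph below `w` bounds the weight of every walk from below, by the triangle inequality, so
its existence rules out negative closed walks, self-loops included. Cutting out closed walks then
never increases a weight, and among the finitely many simple walks between two nodes one is shortest
among all walks. The weights of these walks form a closed graph below `w`, and every other closed
graph below `w` lies under it: they are the shortest-path closure.
-/

section Walks

variable {N : Type*} {i j k : N} {p s : List N}

/-- The node sequence `l` is nonempty, starts at `i` and ends at `j`. Steps that are not arcs are
allowed; they give the sequence the weight `⊤`. -/
def IsWalk (i j : N) (l : List N) : Prop :=
  l.head? = some i ∧ l.getLast? = some j

theorem isWalk_singleton (i : N) : IsWalk i i [i] :=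
  ⟨rfl, rfl⟩

theorem isWalk_pair (i j : N) : IsWalk i j [i, j] :=
  ⟨rfl, rfl⟩

theorem isWalk_append_cons :
    IsWalk i j (p ++ k :: s) ↔ IsWalk i k (p ++ [k]) ∧ IsWalk k j (k :: s) := by
  simp [IsWalk, List.head?_append]

theorem isWalk_cons_cons {a b : N} {l : List N} :
    IsWalk i j (a :: b :: l) ↔ a = i ∧ IsWalk b j (b :: l) := by
  simp [IsWalk, List.getLast?_cons_cons]

theorem pathWeight_append_cons (w : N → N → Qinf) (x : N) (s : List N) :
    ∀ p : List N, pathWeight w (p ++ x :: s) = pathWeight w (p ++ [x]) + pathWeight w (x :: s)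
  | [] => by simp [pathWeight]
  | [a] => by simp [pathWeight]
  | a :: b :: p => by
    have ih := pathWeight_append_cons w x s (b :: p)
    simp only [List.cons_append, pathWeight] at ih ⊢
    rw [ih, add_assoc]

theorem isChain_of_pathWeight_lt_top {w : N → N → Qinf} :
    ∀ {l : List N}, pathWeight w l < ⊤ → l.IsChain (fun a b => w a b < ⊤)
  | [], _ => .nil
  | [_], _ => .singleton _
  | _ :: _ :: _, h =>
    have ⟨harc, htail⟩ := WithTop.add_lt_top.1 h
    .cons_cons harc (isChain_of_pathWeight_lt_top htail)

end Walks

section ShortestWalks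

variable {N : Type*} {d u w : N → N → Qinf} {i j : N}

theorem le_pathWeight_of_triangle (hrefl : ∀ i, u i i ≤ 0)
    (htri : ∀ i j k, u i j ≤ u i k + u k j) (huw : u ≤ w) :
    ∀ {l : List N} {i j : N}, IsWalk i j l → u i j ≤ pathWeight w l
  | [a], i, j, h => by
    obtain ⟨rfl, rfl⟩ : a = i ∧ a = j := by simpa [IsWalk] using h
    exact hrefl a
  | a :: b :: l, i, j, h => by
    obtain ⟨rfl, htail⟩ := isWalk_cons_cons.1 h
    calc u a j ≤ u a b + u b j := htri a j b
      _ ≤ w a b + pathWeight w (b :: l) :=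
        add_le_add (huw a b) (le_pathWeight_of_triangle hrefl htri huw htail)

theorem closedG_of_triangle (hrefl : ∀ i, u i i = 0)
    (htri : ∀ i j k, u i j ≤ u i k + u k j) : ClosedG u := by
  refine ⟨?_, hrefl, htri⟩
  rintro (_ | ⟨a, l⟩) ⟨hlength, hends, -⟩
  · simp at hlength
  · have hwalk : IsWalk a a (a :: l) := ⟨rfl, hends.symm⟩
    exact (hrefl a).ge.trans
      (le_pathWeight_of_triangle (fun i => (hrefl i).le) htri le_rfl hwalk)

theorem ClosedG.le_pathWeight (hu : ClosedG u) (huw : u ≤ w) {l : List N}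
    (hl : IsWalk i j l) : u i j ≤ pathWeight w l :=
  le_pathWeight_of_triangle (fun i => (hu.2.1 i).le) hu.2.2 huw hl

/-- No closed walk has negative weight. This is consistency extended to closed walks that are not
proper cycles, in particular to self-loops. -/
def NoNegativeClosedWalk (w : N → N → Qinf) : Prop :=
  ∀ ⦃i : N⦄ ⦃l : List N⦄, IsWalk i i l → 0 ≤ pathWeight w l

theorem ClosedG.noNegativeClosedWalk_of_le (hu : ClosedG u) (huw : u ≤ w) :
    NoNegativeClosedWalk w :=
  fun i _ hl => (hu.2.1 i).ge.trans (hu.le_pathWeight huw hl)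

theorem NoNegativeClosedWalk.exists_nodup_le (hw : NoNegativeClosedWalk w) :
    ∀ {l : List N} {i j : N}, IsWalk i j l →
      ∃ m : List N, m.Nodup ∧ IsWalk i j m ∧ pathWeight w m ≤ pathWeight w l
  | [a], _, _, h => ⟨[a], List.nodup_singleton a, h, le_rfl⟩
  | a :: b :: l, i, j, h => by
    obtain ⟨rfl, htail⟩ := isWalk_cons_cons.1 h
    obtain ⟨m, hnodup, hm, hle⟩ := hw.exists_nodup_le htail
    obtain ⟨t, rfl⟩ := List.head?_eq_some_iff.1 hm.1
    have hwalk : IsWalk a j (a :: b :: t) := isWalk_cons_cons.2 ⟨rfl, hm⟩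
    have hweight : pathWeight w (a :: b :: t) ≤ pathWeight w (a :: b :: l) := by
      simpa only [pathWeight] using add_le_add_right hle (w a b)
    by_cases ha : a ∈ b :: t
    · obtain ⟨p, s, hsplit⟩ := List.append_of_mem ha
      rw [hsplit, ← List.cons_append] at hwalk hweight
      obtain ⟨hcycle, hrest⟩ := isWalk_append_cons.1 hwalk
      refine ⟨a :: s, (hsplit ▸ hnodup).of_append_right, hrest, ?_⟩
      calc pathWeight w (a :: s)
          ≤ pathWeight w ((a :: p) ++ [a]) + pathWeight w (a :: s) :=
            le_add_of_nonneg_left (hw hcycle)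
        _ = pathWeight w ((a :: p) ++ a :: s) := (pathWeight_append_cons w a s _).symm
        _ ≤ pathWeight w (a :: b :: l) := hweight
    · exact ⟨a :: b :: t, List.nodup_cons.2 ⟨ha, hnodup⟩, hwalk, hweight⟩

theorem NoNegativeClosedWalk.exists_nodup_isLeast [Finite N] (hw : NoNegativeClosedWalk w)
    (i j : N) :
    ∃ l : List N, l.Nodup ∧ IsWalk i j l ∧
      IsLeast (pathWeight w '' {m | IsWalk i j m}) (pathWeight w l) := by
  have hfinite : {l : List N | l.Nodup ∧ IsWalk i j l}.Finite := by
    cases nonempty_fintype N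
    exact (List.finite_length_le N (Fintype.card N)).subset fun _ hl => hl.1.length_le_card
  obtain ⟨m, hm, hwalk, -⟩ := hw.exists_nodup_le (isWalk_pair i j)
  obtain ⟨l, ⟨hnodup, hl⟩, hmin⟩ := Set.exists_min_image _ (pathWeight w) hfinite ⟨m, hm, hwalk⟩
  refine ⟨l, hnodup, hl, Set.mem_image_of_mem _ hl, ?_⟩
  rintro _ ⟨m, hm, rfl⟩
  obtain ⟨m', hnodup', hm', hle⟩ := hw.exists_nodup_le hm
  exact (hmin m' ⟨hnodup', hm'⟩).trans hle

/-- The graph `d` records the weights of shortest walks in `w`; in particular these are attained. -/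
def IsShortestWalkWeight (w d : N → N → Qinf) : Prop :=
  ∀ i j, IsLeast (pathWeight w '' {l | IsWalk i j l}) (d i j)

theorem IsShortestWalkWeight.le_pathWeight (hd : IsShortestWalkWeight w d) {l : List N}
    (hl : IsWalk i j l) : d i j ≤ pathWeight w l :=
  (hd i j).2 (Set.mem_image_of_mem _ hl)

theorem IsShortestWalkWeight.le (hd : IsShortestWalkWeight w d) : d ≤ w := fun i j => by
  simpa [pathWeight] using hd.le_pathWeight (isWalk_pair i j)

theorem IsShortestWalkWeight.triangle (hd : IsShortestWalkWeight w d) (i j k : N) :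
    d i j ≤ d i k + d k j := by
  obtain ⟨l, hl, hleft⟩ := (hd i k).1
  obtain ⟨m, hm, hright⟩ := (hd k j).1
  obtain ⟨p, rfl⟩ := List.getLast?_eq_some_iff.1 hl.2
  obtain ⟨s, rfl⟩ := List.head?_eq_some_iff.1 hm.1
  calc d i j ≤ pathWeight w (p ++ k :: s) := hd.le_pathWeight (isWalk_append_cons.2 ⟨hl, hm⟩)
    _ = d i k + d k j := by rw [pathWeight_append_cons, hleft, hright]

theorem IsShortestWalkWeight.closedG (hd : IsShortestWalkWeight w d)
    (hw : NoNegativeClosedWalk w) : ClosedG d := by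
  refine closedG_of_triangle (fun i => le_antisymm ?_ ?_) hd.triangle
  · exact hd.le_pathWeight (isWalk_singleton i)
  · obtain ⟨l, hl, hweight⟩ := (hd i i).1
    exact hweight ▸ hw hl

theorem IsShortestWalkWeight.isGreatest (hd : IsShortestWalkWeight w d)
    (hw : NoNegativeClosedWalk w) : IsGreatest {u | ClosedG u ∧ u ≤ w} d := by
  refine ⟨⟨hd.closedG hw, hd.le⟩, fun u ⟨hu, huw⟩ i j => ?_⟩
  obtain ⟨l, hl, hweight⟩ := (hd i j).1
  exact hweight ▸ hu.le_pathWeight huw hl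

end ShortestWalks

theorem closure_arc_realized_by_simple_path_general {N : Type*} [Finite N] {w : N → N → Qinf}
    {z₁ z₂ : N} {c : Qinf}
    (hc : IsLUB {q : Qinf | ∃ u : N → N → Qinf, ClosedG u ∧ u ≤ w ∧ q = u z₁ z₂} c)
    (hfin : c < ⊤) :
    ∃ π : List N, π.IsChain (fun a b => w a b < ⊤) ∧ π.head? = some z₁ ∧
      π.getLast? = some z₂ ∧ π.Nodup ∧ c = pathWeight w π := by
  obtain ⟨_, u, hu, huw, -⟩ := hc.nonempty
  have hw : NoNegativeClosedWalk w := hu.noNegativeClosedWalk_of_le huw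
  choose P hnodup hwalk hleast using hw.exists_nodup_isLeast
  have hshortest : IsShortestWalkWeight w fun i j => pathWeight w (P i j) := hleast
  obtain ⟨⟨hclosed, hle⟩, hmax⟩ := hshortest.isGreatest hw
  have heq : c = pathWeight w (P z₁ z₂) := by
    refine hc.unique (IsGreatest.isLUB ⟨⟨_, hclosed, hle, rfl⟩, ?_⟩)
    rintro _ ⟨u, hu, huw, rfl⟩
    exact hmax ⟨hu, huw⟩ z₁ z₂
  exact ⟨P z₁ z₂, isChain_of_pathWeight_lt_top (heq ▸ hfin), (hwalk z₁ z₂).1, (hwalk z₁ z₂).2,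
    hnodup z₁ z₂, heq⟩

/-- Any finite entry of the shortest-path closure of an octagonal
    graph is realized by the weight of a simple path in the original graph. -/
theorem closure_arc_realized_by_simple_path
    {n : ℕ} (hn : 1 ≤ n) (w : Fin (2 * n) → Fin (2 * n) → Qinf)
    (hoct : Octagonal w)
    (wstar : Fin (2 * n) → Fin (2 * n) → Qinf)
    (hstar : ∀ i j, IsLUB
      {q : Qinf | ∃ w' : Fin (2 * n) → Fin (2 * n) → Qinf,
        ClosedG w' ∧ GLe w' w ∧ q = w' i j} (wstar i j))
    (z₁ z₂ : Fin (2 * n)) (harc : wstar z₁ z₂ < ⊤) :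
    ∃ π : List (Fin (2 * n)),
      π.Chain' (fun a b => w a b < ⊤) ∧ π.head? = some z₁ ∧
        π.getLast? = some z₂ ∧ π.Nodup ∧ wstar z₁ z₂ = pathWeight w π :=
  closure_arc_realized_by_simple_path_general (hstar z₁ z₂) harc
end

section
/- Every tightly closed integer octagonal graph G = (𝒩, w) is ℤ-consistent: there exists a valuation ρ : 𝒩 → ℤ such that ρ(ī) = −ρ(i) for all i ∈ 𝒩 and ρ(i) − ρ(j) ≤ w(i,j) for all i, j ∈ 𝒩 with w(i,j) < +∞. -/
/-!
A valuation is built one pair of nodes `k`, `bar k` at a time. The arcs leaving `k` towards the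
nodes already treated, together with half the arc `k → bar k`, bound the value `x` at `k` from
above. By coherence the arcs entering `k` are the arcs leaving `bar k`, which bound `-x` from above
in the same way. The triangle inequality makes each bound at `k` plus each bound at `bar k`
nonnegative, so a suitable `x` exists. Evenness of the weights `w k (bar k)` keeps the half arcs
integral, so that the whole argument takes place inside `ℤ`.
-/

section WithTop

variable {A : Type*} [AddCommGroup A]

theorem coe_le_iff_add_coe_neg_nonneg [PartialOrder A] [IsOrderedAddMonoid A] {a : A}
    {x : WithTop A} :
    (a : WithTop A) ≤ x ↔ 0 ≤ x + ((-a : A) : WithTop A) := by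
  cases x with
  | top => simp
  | coe x => norm_cast; simp

theorem exists_coe_le_and_coe_neg_le [PartialOrder A] [IsOrderedAddMonoid A] {p q : WithTop A}
    (h : 0 ≤ p + q) :
    ∃ x : A, (x : WithTop A) ≤ p ∧ ((-x : A) : WithTop A) ≤ q := by
  cases p with
  | coe p => exact ⟨p, le_rfl, by rwa [coe_le_iff_add_coe_neg_nonneg, neg_neg, add_comm]⟩
  | top =>
    cases q with
    | coe q => exact ⟨-q, le_top, by simp⟩
    | top => exact ⟨0, le_top, le_top⟩

theorem exists_forall_coe_le_and_forall_coe_neg_le [LinearOrder A] [IsOrderedAddMonoid A]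
    {P Q : Set (WithTop A)} (hP : P.Finite) (hQ : Q.Finite)
    (h : ∀ p ∈ P, ∀ q ∈ Q, 0 ≤ p + q) :
    ∃ x : A, (∀ p ∈ P, (x : WithTop A) ≤ p) ∧ ∀ q ∈ Q, ((-x : A) : WithTop A) ≤ q := by
  obtain ⟨p, hp, hp_min⟩ :=
    Set.exists_min_image (insert ⊤ P) id (hP.insert ⊤) (Set.insert_nonempty ⊤ P)
  obtain ⟨q, hq, hq_min⟩ :=
    Set.exists_min_image (insert ⊤ Q) id (hQ.insert ⊤) (Set.insert_nonempty ⊤ Q)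
  have hpq : 0 ≤ p + q := by
    rcases hp with rfl | hp
    · simp
    rcases hq with rfl | hq
    · simp
    exact h p hp q hq
  obtain ⟨x, hxp, hxq⟩ := exists_coe_le_and_coe_neg_le hpq
  exact ⟨x, fun u hu => hxp.trans (hp_min u (Or.inr hu)),
    fun v hv => hxq.trans (hq_min v (Or.inr hv))⟩

end WithTop

section Valuation

variable {N A : Type*} [AddCommGroup A] {b : N → N} {w : N → N → WithTop A} {ρ σ : N → A}
  {S : Set N} {h h' : WithTop A} {k : N}

theorem exists_odd_extension (hb : Function.Involutive b) (hρ : ∀ i, ρ (b i) = -ρ i) {x : A}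
    (hx : b k = k → x = 0) :
    ∃ σ : N → A, (∀ i, σ (b i) = -σ i) ∧ σ k = x ∧ ∀ i, i ≠ k → i ≠ b k → σ i = ρ i := by
  classical
  refine ⟨Function.update (Function.update ρ (b k) (-x)) k x, fun i => ?_, by simp,
    fun i hik hibk => by simp [hik, hibk]⟩
  by_cases hik : i = k
  · subst hik
    by_cases hi : b i = i
    · simp [hi, hx hi]
    · simp [hi]
  by_cases hibk : i = b k
  · subst hibk
    simp [hb k, hik]
  have hbik : b i ≠ k := fun h => hibk (by rw [← h, hb i])
  simp [hik, hibk, hbik, hb.injective.ne hik, hρ]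

/-- The upper bounds on the value at `k` coming from the arcs `k → i` with `i ∈ S`, where the value
`ρ i` is already known, and from the arc `k → b k`, half of whose weight is `h`. -/
def valueBounds (w : N → N → WithTop A) (ρ : N → A) (S : Set N) (h : WithTop A) (k : N) :
    Set (WithTop A) :=
  insert h ((fun i => w k i + (ρ i : WithTop A)) '' S)

theorem valueBounds_congr (hσ : S.EqOn σ ρ) : valueBounds w σ S h k = valueBounds w ρ S h k := by
  unfold valueBounds
  rw [Set.image_congr fun i hi => by rw [hσ hi]]

theorem finite_valueBounds (hS : S.Finite) : (valueBounds w ρ S h k).Finite :=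
  (hS.image _).insert _

variable [LinearOrder A]

/-- The closed coherent graphs `w` on a set with an involution `b` (the bar of the paper) for which
each weight `w i (b i)` can be halved. Since `⊤ = ⊤ + ⊤` is even, this constrains finite weights
only. With `A = ℤ` these conditions all hold for tightly closed graphs. -/
structure IsTight (b : N → N) (w : N → N → WithTop A) : Prop where
  involutive : Function.Involutive b
  self (i : N) : w i i = 0
  triangle (i j k : N) : w i j ≤ w i k + w k j
  coherent (i j : N) : w i j = w (b j) (b i)
  even (i : N) : Even (w i (b i))

/-- A valuation that is odd with respect to `b` and satisfies the constraints of `w` between the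
nodes of `S`: a partial solution. It is a total function so that oddness can be stated outright;
its values off `S` are otherwise arbitrary. -/
structure IsValuationOn (b : N → N) (w : N → N → WithTop A) (S : Set N) (ρ : N → A) : Prop where
  odd (i : N) : ρ (b i) = -ρ i
  sub_le : ∀ i ∈ S, ∀ j ∈ S, ((ρ i - ρ j : A) : WithTop A) ≤ w i j

namespace IsTight

theorem sub_le_bar_iff (hw : IsTight b w) (hρ : ∀ i, ρ (b i) = -ρ i) (i j : N) :
    ((ρ (b j) - ρ (b i) : A) : WithTop A) ≤ w (b j) (b i) ↔
      ((ρ i - ρ j : A) : WithTop A) ≤ w i j := by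
  rw [← hw.coherent, hρ, hρ, neg_sub_neg]

theorem isValuationOn_insert (hw : IsTight b w) (hS : S.MapsTo b S) (hσ : IsValuationOn b w S σ)
    (hk : ∀ j ∈ insert k (insert (b k) S), ((σ k - σ j : A) : WithTop A) ≤ w k j)
    (hbk : ∀ j ∈ insert k (insert (b k) S), ((σ (b k) - σ j : A) : WithTop A) ≤ w (b k) j) :
    IsValuationOn b w (insert k (insert (b k) S)) σ where
  odd := hσ.odd
  sub_le := by
    rintro i (rfl | rfl | hi) j hj
    · exact hk j hj
    · exact hbk j hj
    have hbi : b i ∈ insert k (insert (b k) S) := Or.inr (Or.inr (hS hi))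
    rcases hj with rfl | rfl | hj
    · exact (hw.sub_le_bar_iff hσ.odd _ _).1 (hbk _ hbi)
    · rw [← hw.sub_le_bar_iff hσ.odd, hw.involutive]
      exact hk _ hbi
    · exact hσ.sub_le i hi j hj

variable [IsOrderedAddMonoid A]

theorem half_add_half_nonneg (hw : IsTight b w) (hh : w k (b k) = h + h)
    (hh' : w (b k) k = h' + h') : 0 ≤ h + h' := by
  have hdouble : 0 ≤ 2 • (h + h') :=
    calc
      0 ≤ w k (b k) + w (b k) k := (hw.self k).symm.trans_le (hw.triangle k k (b k))
      _ = 2 • (h + h') := by rw [hh, hh']; abel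
  exact (nsmul_nonneg_iff two_ne_zero).1 hdouble

theorem half_add_bound_nonneg (hw : IsTight b w) (hS : S.MapsTo b S) (hρ : IsValuationOn b w S ρ)
    (hh : w k (b k) = h + h) {j : N} (hj : j ∈ S) : 0 ≤ h + (w (b k) j + (ρ j : WithTop A)) := by
  have hcoh : w (b j) k = w (b k) j := by rw [hw.coherent, hw.involutive]
  have hdouble : 0 ≤ 2 • (h + (w (b k) j + (ρ j : WithTop A))) :=
    calc
      0 ≤ w (b j) j + ((-(ρ (b j) - ρ j) : A) : WithTop A) :=
        coe_le_iff_add_coe_neg_nonneg.1 (hρ.sub_le _ (hS hj) _ hj)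
      _ = w (b j) j + (ρ j + ρ j) := by rw [hρ.odd, ← WithTop.coe_add]; congr 2; abel
      _ ≤ w (b j) k + (w k (b k) + w (b k) j) + (ρ j + ρ j) := by
        gcongr
        exact (hw.triangle _ _ k).trans (by gcongr; exact hw.triangle _ _ (b k))
      _ = 2 • (h + (w (b k) j + (ρ j : WithTop A))) := by rw [hcoh, hh]; abel
  exact (nsmul_nonneg_iff two_ne_zero).1 hdouble

theorem bound_add_bound_nonneg (hw : IsTight b w) (hS : S.MapsTo b S) (hρ : IsValuationOn b w S ρ)
    {i j : N} (hi : i ∈ S) (hj : j ∈ S) :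
    0 ≤ w k i + (ρ i : WithTop A) + (w (b k) j + (ρ j : WithTop A)) := by
  have hcoh : w (b j) k = w (b k) j := by rw [hw.coherent, hw.involutive]
  calc
    0 ≤ w (b j) i + ((-(ρ (b j) - ρ i) : A) : WithTop A) :=
      coe_le_iff_add_coe_neg_nonneg.1 (hρ.sub_le _ (hS hj) _ hi)
    _ = w (b j) i + (ρ i + ρ j) := by rw [hρ.odd, ← WithTop.coe_add]; congr 2; abel
    _ ≤ w (b j) k + w k i + (ρ i + ρ j) := by gcongr; exact hw.triangle _ _ k
    _ = w k i + ρ i + (w (b k) j + ρ j) := by rw [hcoh]; abel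

theorem add_nonneg_of_mem_valueBounds (hw : IsTight b w) (hS : S.MapsTo b S)
    (hρ : IsValuationOn b w S ρ) (hh : w k (b k) = h + h) (hh' : w (b k) k = h' + h') :
    ∀ u ∈ valueBounds w ρ S h k, ∀ v ∈ valueBounds w ρ S h' (b k), 0 ≤ u + v := by
  rintro u (rfl | ⟨i, hi, rfl⟩) v (rfl | ⟨j, hj, rfl⟩)
  · exact hw.half_add_half_nonneg hh hh'
  · exact hw.half_add_bound_nonneg hS hρ hh hj
  · have hsymm := hw.half_add_bound_nonneg (k := b k) hS hρ (by rwa [hw.involutive]) hi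
    rwa [hw.involutive, add_comm] at hsymm
  · exact hw.bound_add_bound_nonneg hS hρ hi hj

theorem eq_zero_of_bar_eq_self (hw : IsTight b w) (hk : b k = k) {x : A}
    (hh : w k (b k) = h + h) (hh' : w (b k) k = h' + h') (hx : (x : WithTop A) ≤ h)
    (hx' : ((-x : A) : WithTop A) ≤ h') : x = 0 := by
  rw [hk, hw.self] at hh hh'
  have nonpos_of_le : ∀ {y : A} {g : WithTop A}, 0 = g + g → (y : WithTop A) ≤ g → y ≤ 0 := by
    intro y g hg hy
    have hyy : ((y + y : A) : WithTop A) ≤ ((0 : A) : WithTop A) := by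
      rw [WithTop.coe_add, WithTop.coe_zero, hg]; exact add_le_add hy hy
    rw [WithTop.coe_le_coe, ← two_nsmul] at hyy
    exact (nsmul_nonpos_iff two_ne_zero).1 hyy
  exact le_antisymm (nonpos_of_le hh hx) (neg_nonpos.1 (nonpos_of_le hh' hx'))

theorem sub_le_of_le_valueBounds (hw : IsTight b w) (hρ : ∀ i, ρ (b i) = -ρ i)
    (hh : w k (b k) = h + h) (hk : ∀ u ∈ valueBounds w ρ S h k, (ρ k : WithTop A) ≤ u) :
    ∀ j ∈ insert k (insert (b k) S), ((ρ k - ρ j : A) : WithTop A) ≤ w k j := by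
  rintro j (rfl | rfl | hj)
  · simp [hw.self]
  · have hhalf : (ρ k : WithTop A) ≤ h := hk h (Set.mem_insert _ _)
    rw [hρ, sub_neg_eq_add, hh, WithTop.coe_add]
    exact add_le_add hhalf hhalf
  · have hbound := hk _ (Set.mem_insert_of_mem _ ⟨j, hj, rfl⟩)
    rw [coe_le_iff_add_coe_neg_nonneg] at hbound ⊢
    rwa [neg_sub, sub_eq_add_neg, WithTop.coe_add, ← add_assoc]

theorem exists_isValuationOn_insert (hw : IsTight b w) (hS : S.MapsTo b S) (hSfin : S.Finite)
    (hρ : IsValuationOn b w S ρ) (hk : k ∉ S) :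
    ∃ σ : N → A, IsValuationOn b w (insert k (insert (b k) S)) σ := by
  obtain ⟨h, hh⟩ := hw.even k
  obtain ⟨h', hh'⟩ := hw.even (b k)
  have hh'k : w (b k) k = h' + h' := by rwa [hw.involutive] at hh'
  obtain ⟨x, hx, hx'⟩ := exists_forall_coe_le_and_forall_coe_neg_le
    (finite_valueBounds hSfin) (finite_valueBounds hSfin)
    (hw.add_nonneg_of_mem_valueBounds hS hρ hh hh'k)
  obtain ⟨σ, hσ_odd, rfl, hσ⟩ := exists_odd_extension hw.involutive hρ.odd fun hbk =>
    hw.eq_zero_of_bar_eq_self hbk hh hh'k (hx _ (Set.mem_insert _ _)) (hx' _ (Set.mem_insert _ _))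
  have hσρ : S.EqOn σ ρ := fun i hi => hσ i (by rintro rfl; exact hk hi)
    (by rintro rfl; exact hk (hw.involutive k ▸ hS hi))
  have hσS : IsValuationOn b w S σ :=
    ⟨hσ_odd, fun i hi j hj => by rw [hσρ hi, hσρ hj]; exact hρ.sub_le i hi j hj⟩
  rw [← hσ_odd] at hx'
  refine ⟨σ, hw.isValuationOn_insert hS hσS
    (hw.sub_le_of_le_valueBounds hσ_odd hh (valueBounds_congr hσρ ▸ hx)) ?_⟩
  have hσ_bar := hw.sub_le_of_le_valueBounds hσ_odd hh' (valueBounds_congr hσρ ▸ hx')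
  rwa [hw.involutive, Set.insert_comm] at hσ_bar

theorem exists_isValuationOn (hw : IsTight b w) {T : Set N} (hT : T.Finite) :
    ∃ ρ : N → A, IsValuationOn b w T ρ := by
  suffices ∃ S, T ⊆ S ∧ S.Finite ∧ S.MapsTo b S ∧ ∃ ρ : N → A, IsValuationOn b w S ρ by
    obtain ⟨S, hTS, -, -, ρ, hρ⟩ := this
    exact ⟨ρ, hρ.odd, fun i hi j hj => hρ.sub_le i (hTS hi) j (hTS hj)⟩
  induction T, hT using Set.Finite.induction_on with
  | empty => exact ⟨∅, le_rfl, Set.finite_empty, Set.mapsTo_empty _ _, 0, by simp, by simp⟩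
  | @insert k T _ _ ih =>
    obtain ⟨S, hTS, hSfin, hS, ρ, hρ⟩ := ih
    by_cases hk : k ∈ S
    · exact ⟨S, Set.insert_subset hk hTS, hSfin, hS, ρ, hρ⟩
    refine ⟨insert k (insert (b k) S), Set.insert_subset_insert (hTS.trans (Set.subset_insert _ _)),
      (hSfin.insert _).insert _, ?_, hw.exists_isValuationOn_insert hS hSfin hρ hk⟩
    rintro i (rfl | rfl | hi)
    · simp
    · simp [hw.involutive k]
    · exact Or.inr (Or.inr (hS hi))

end IsTight

end Valuation

section IntegerWeights

variable {R : Type*}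

theorem withTop_map_intCast_le [Ring R] [PartialOrder R] [IsStrictOrderedRing R]
    {x y : WithTop ℤ} :
    x.map (Int.cast : ℤ → R) ≤ y.map Int.cast ↔ x ≤ y :=
  WithTop.map_le_iff _ Int.cast_le

theorem exists_withTop_map_intCast_eq [IntCast R] {x : WithTop R}
    (hx : x = ⊤ ∨ ∃ d : ℤ, x = (d : R)) :
    ∃ y : WithTop ℤ, y.map Int.cast = x := by
  rcases hx with rfl | ⟨d, rfl⟩
  exacts [⟨⊤, rfl⟩, ⟨d, rfl⟩]

theorem even_of_withTop_map_intCast [AddGroupWithOne R] [CharZero R] {x : WithTop ℤ}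
    (hx : x.map (Int.cast : ℤ → R) = ⊤ ∨
      ∃ d : ℤ, x.map Int.cast = (((2 * d : ℤ) : R) : WithTop R)) :
    Even x := by
  cases x with
  | top => exact ⟨⊤, rfl⟩
  | coe x =>
    obtain ⟨d, hd⟩ := hx.resolve_left WithTop.coe_ne_top
    have : x = d + d := by rw [← two_mul]; exact_mod_cast WithTop.coe_injective hd
    exact ⟨d, by exact_mod_cast this⟩

end IntegerWeights

theorem tightly_closed_is_Z_consistent_general {N R : Type*} [Finite N] [Ring R] [PartialOrder R]
    [IsStrictOrderedRing R] {b : N → N} {w : N → N → WithTop R} (hb : Function.Involutive b)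
    (hint : ∀ i j, w i j = ⊤ ∨ ∃ d : ℤ, w i j = (d : R)) (hself : ∀ i, w i i = 0)
    (htri : ∀ i j k, w i j ≤ w i k + w k j) (hcoh : ∀ i j, w i j = w (b j) (b i))
    (heven : ∀ i, w i (b i) = ⊤ ∨ ∃ d : ℤ, w i (b i) = (((2 * d : ℤ) : R) : WithTop R)) :
    ∃ ρ : N → ℤ, (∀ i, ρ (b i) = -ρ i) ∧
      ∀ i j, (((ρ i - ρ j : ℤ) : R) : WithTop R) ≤ w i j := by
  choose W hW using fun i j => exists_withTop_map_intCast_eq (hint i j)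
  have hinj : Function.Injective (WithTop.map (Int.cast : ℤ → R)) :=
    WithTop.map_injective Int.cast_injective
  have hWtight : IsTight b W :=
    { involutive := hb
      self := fun i => hinj (by simp [hW, hself])
      triangle := fun i j k => (withTop_map_intCast_le (R := R)).1 <|
        calc
          (W i j).map Int.cast ≤ (W i k).map Int.cast + (W k j).map Int.cast := by
            simpa only [hW] using htri i j k
          _ = (W i k + W k j).map Int.cast := (WithTop.map_add (Int.castAddHom R) _ _).symm
      coherent := fun i j => hinj (by rw [hW, hW, hcoh])
      even := fun i => even_of_withTop_map_intCast (R := R) (by simpa only [hW] using heven i) }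
  obtain ⟨ρ, hρ⟩ := hWtight.exists_isValuationOn Set.finite_univ
  refine ⟨ρ, hρ.odd, fun i j => ?_⟩
  rw [← hW]
  exact withTop_map_intCast_le.2 (hρ.sub_le i trivial j trivial)

/-- Every tightly closed integer octagonal graph is ℤ-consistent. -/
theorem tightly_closed_is_Z_consistent
    {n : ℕ} (hn : 1 ≤ n) (w : Fin (2 * n) → Fin (2 * n) → Qinf)
    (htc : TightlyClosed w) :
    ∃ ρ : Fin (2 * n) → ℤ,
      (∀ i, ρ (bar i) = -ρ i) ∧
      ∀ i j, w i j < ⊤ → (((ρ i - ρ j : ℤ) : ℚ) : Qinf) ≤ w i j := by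
  obtain ⟨hint, ⟨⟨-, hcoh⟩, ⟨-, hself, htri⟩, -⟩, heven⟩ := htc
  obtain ⟨ρ, hodd, hle⟩ :=
    tightly_closed_is_Z_consistent_general bar_involutive hint hself htri hcoh heven
  exact ⟨ρ, hodd, fun i j _ => hle i j⟩
end

section
/- Let G = (𝒩, w) be an integer octagonal graph. If there exists a tightly closed integer octagonal graph w′ with w′ ⊴ w, then G is ℤ-consistent: there exists a valuation ρ : 𝒩 → ℤ such that ρ(ī) = −ρ(i) for all i ∈ 𝒩 and ρ(i) − ρ(j) ≤ w(i,j) for all i, j ∈ 𝒩 with w(i,j) < +∞. -/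
/-!
Writing `u i j = w i (σ j)`, where `σ` is the bar involution, turns the difference constraints
`ρ i - ρ j ≤ w i j` into the sum constraints `ρ i + ρ j ≤ u i j`, and coherence of `w` into
symmetry of `u`. Values are assigned to one pair `k`, `σ k` of nodes at a time. The constraints
tying `k` to the nodes already treated bound `ρ k` from both sides, and so do the unary constraints
`2 ρ k ≤ u k k` and `-2 ρ k ≤ u (σ k) (σ k)`. By the triangle inequality every lower bound is at
most every upper bound; since the `u k k` are even, all these bounds are integers, so an integer
fits between them.
-/

section OrderedGroup

variable {G : Type*} [AddCommGroup G] [LinearOrder G] [IsOrderedAddMonoid G]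

theorem coe_le_sub_coe_iff {x y : G} {c : WithTop G} :
    (x : WithTop G) ≤ c - y ↔ ((x + y : G) : WithTop G) ≤ c := by
  cases c with
  | top => simp
  | coe c =>
    norm_cast
    exact le_sub_iff_add_le

theorem sub_coe_add_sub_coe_nonneg_iff {x y : G} {c d : WithTop G} :
    0 ≤ (c - x) + (d - y) ↔ ((x + y : G) : WithTop G) ≤ c + d := by
  cases c with
  | top => simp
  | coe c =>
    cases d with
    | top => simp
    | coe d =>
      norm_cast
      rw [sub_add_sub_comm, sub_nonneg]

theorem exists_coe_le_and_coe_neg_le_s10 {a b : WithTop G} (h : 0 ≤ a + b) :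
    ∃ x : G, (x : WithTop G) ≤ a ∧ ((-x : G) : WithTop G) ≤ b := by
  cases a with
  | coe a =>
    refine ⟨a, le_rfl, ?_⟩
    cases b with
    | top => exact le_top
    | coe b =>
      norm_cast at h ⊢
      exact neg_le_iff_add_nonneg'.2 h
  | top =>
    cases b with
    | top => exact ⟨0, le_top, le_top⟩
    | coe b => exact ⟨-b, le_top, by rw [neg_neg]⟩

theorem exists_coe_le_and_coe_neg_le_of_finite {S T : Set (WithTop G)} (hS : S.Finite)
    (hT : T.Finite) (h : ∀ a ∈ S, ∀ b ∈ T, 0 ≤ a + b) :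
    ∃ x : G, (∀ a ∈ S, (x : WithTop G) ≤ a) ∧ ∀ b ∈ T, ((-x : G) : WithTop G) ≤ b := by
  -- Adjoining `⊤` adds no constraint and makes both sets nonempty, so that they have minima.
  obtain ⟨a, ha, hamin⟩ :=
    Set.exists_min_image (insert ⊤ S) id (hS.insert ⊤) (Set.insert_nonempty ⊤ S)
  obtain ⟨b, hb, hbmin⟩ :=
    Set.exists_min_image (insert ⊤ T) id (hT.insert ⊤) (Set.insert_nonempty ⊤ T)
  have hab : 0 ≤ a + b := by
    rcases ha with rfl | ha
    · simp
    rcases hb with rfl | hb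
    · simp
    exact h a ha b hb
  obtain ⟨x, hxa, hxb⟩ := exists_coe_le_and_coe_neg_le_s10 hab
  exact ⟨x, fun c hc ↦ hxa.trans (hamin c (.inr hc)), fun c hc ↦ hxb.trans (hbmin c (.inr hc))⟩

end OrderedGroup

section Octagon

variable {N G : Type*} {σ : N → N}

theorem exists_odd_update [AddCommGroup G] (hσ : σ.Involutive) {ρ : N → G}
    (hρ : ∀ i, ρ (σ i) = -ρ i) {k : N} {x : G} (hx : σ k = k → -x = x) :
    ∃ ρ' : N → G, (∀ i, ρ' (σ i) = -ρ' i) ∧ ρ' k = x ∧ ∀ i, i ≠ k → i ≠ σ k → ρ' i = ρ i := by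
  classical
  refine ⟨Function.update (Function.update ρ (σ k) (-x)) k x, fun i ↦ ?_, by simp,
    fun i hik hiσk ↦ by simp [hik, hiσk]⟩
  by_cases hfix : σ k = k
  · by_cases hik : i = k
    · simp [hik, hfix, hx hfix]
    · have hσik : σ i ≠ k := fun h ↦ hik (hσ.injective (h.trans hfix.symm))
      simp [hik, hσik, hfix, hρ]
  · by_cases hik : i = k
    · simp [hik, hfix]
    by_cases hiσk : i = σ k
    · simp [hiσk, hσ k, hfix]
    have hσik : σ i ≠ k := fun h ↦ hiσk (by rw [← h, hσ i])
    simp [hik, hiσk, hσik, hσ.injective.ne hik, hρ]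

variable [AddCommGroup G] [LinearOrder G] [IsOrderedAddMonoid G]

/-- A closed system of octagonal constraints `ρ i + ρ j ≤ u i j` with even unary bounds `u i i`,
where `σ` is the involution of the nodes and `ρ : N → G` is odd. The entry `u i j` is the weight of
the arc from `i` to `σ j` in the corresponding graph. Since `⊤ + ⊤ = ⊤`, the entry `⊤` is even. -/
structure IsEvenOctagon (σ : N → N) (u : N → N → WithTop G) : Prop where
  symm : ∀ i j, u i j = u j i
  apply_bar : ∀ i, u i (σ i) = 0
  triangle : ∀ i j k, u i j ≤ u i k + u (σ k) j
  even : ∀ i, Even (u i i)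

/-- An odd function on the nodes that satisfies those constraints of the system `u` which only
involve nodes in `A`. -/
structure IsValuationOn_s10 (σ : N → N) (u : N → N → WithTop G) (A : Set N) (ρ : N → G) : Prop where
  apply_bar : ∀ i, ρ (σ i) = -ρ i
  add_le : ∀ i ∈ A, ∀ j ∈ A, ((ρ i + ρ j : G) : WithTop G) ≤ u i j

/-- The constraints on a value `x` for the node `k` that come from `k` itself and from the values
`ρ` of the nodes in `A`. -/
structure IsAdmissibleAt (u : N → N → WithTop G) (A : Set N) (ρ : N → G) (k : N) (x : G) :
    Prop where
  add_self_le : ((x + x : G) : WithTop G) ≤ u k k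
  add_le : ∀ j ∈ A, ((x + ρ j : G) : WithTop G) ≤ u k j

namespace IsEvenOctagon

variable {u : N → N → WithTop G} {A : Set N} {ρ : N → G} {i j k : N} {a b : WithTop G}

theorem half_add_half_nonneg (hu : IsEvenOctagon σ u) (ha : u k k = a + a)
    (hb : u (σ k) (σ k) = b + b) : 0 ≤ a + b := by
  refine (nsmul_nonneg_iff two_ne_zero).1 ?_
  calc
    0 = u k (σ k) := (hu.apply_bar k).symm
    _ ≤ u k k + u (σ k) (σ k) := hu.triangle _ _ _
    _ = 2 • (a + b) := by rw [ha, hb, two_nsmul, add_add_add_comm]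

theorem sub_add_sub_nonneg (hu : IsEvenOctagon σ u) (hρ : IsValuationOn_s10 σ u A ρ) (hi : i ∈ A)
    (hj : j ∈ A) : 0 ≤ (u k i - ρ i) + (u (σ k) j - ρ j) := by
  rw [sub_coe_add_sub_coe_nonneg_iff]
  calc
    ((ρ i + ρ j : G) : WithTop G) ≤ u i j := hρ.add_le i hi j hj
    _ ≤ u i k + u (σ k) j := hu.triangle _ _ _
    _ = u k i + u (σ k) j := by rw [hu.symm i k]

theorem half_add_sub_nonneg (hu : IsEvenOctagon σ u) (hσ : σ.Involutive)
    (hρ : IsValuationOn_s10 σ u A ρ) (ha : u k k = a + a) (hj : j ∈ A) :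
    0 ≤ a + (u (σ k) j - ρ j) := by
  rw [← add_sub_assoc]
  refine (nsmul_nonneg_iff two_ne_zero).1 ?_
  rw [two_nsmul, sub_coe_add_sub_coe_nonneg_iff]
  calc
    ((ρ j + ρ j : G) : WithTop G) ≤ u j j := hρ.add_le j hj j hj
    _ ≤ u j (σ k) + u k j := by simpa only [hσ k] using hu.triangle j j (σ k)
    _ ≤ u j (σ k) + (u k k + u (σ k) j) := by gcongr; exact hu.triangle _ _ _
    _ = a + u (σ k) j + (a + u (σ k) j) := by rw [hu.symm j, ha]; abel

theorem exists_isAdmissibleAt (hu : IsEvenOctagon σ u) (hσ : σ.Involutive) (hA : A.Finite)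
    (hρ : IsValuationOn_s10 σ u A ρ) (k : N) :
    ∃ x, IsAdmissibleAt u A ρ k x ∧ IsAdmissibleAt u A ρ (σ k) (-x) := by
  obtain ⟨a, ha⟩ := hu.even k
  obtain ⟨b, hb⟩ := hu.even (σ k)
  have hsum : ∀ c ∈ insert a ((fun j ↦ u k j - ρ j) '' A),
      ∀ d ∈ insert b ((fun j ↦ u (σ k) j - ρ j) '' A), 0 ≤ c + d := by
    rintro c (rfl | ⟨i, hi, rfl⟩) d (rfl | ⟨j, hj, rfl⟩)
    · exact hu.half_add_half_nonneg ha hb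
    · exact hu.half_add_sub_nonneg hσ hρ ha hj
    · simpa only [hσ k, add_comm] using hu.half_add_sub_nonneg hσ hρ hb hi
    · exact hu.sub_add_sub_nonneg hρ hi hj
  obtain ⟨x, hxk, hxσk⟩ := exists_coe_le_and_coe_neg_le_of_finite
    ((hA.image _).insert a) ((hA.image _).insert b) hsum
  refine ⟨x, ⟨?_, fun j hj ↦ ?_⟩, ?_, fun j hj ↦ ?_⟩
  · rw [ha, WithTop.coe_add]
    exact add_le_add (hxk a (.inl rfl)) (hxk a (.inl rfl))
  · exact coe_le_sub_coe_iff.1 (hxk _ (.inr ⟨j, hj, rfl⟩))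
  · rw [hb, WithTop.coe_add]
    exact add_le_add (hxσk b (.inl rfl)) (hxσk b (.inl rfl))
  · exact coe_le_sub_coe_iff.1 (hxσk _ (.inr ⟨j, hj, rfl⟩))

theorem neg_eq_self_of_isAdmissibleAt (hu : IsEvenOctagon σ u) {x : G} (hk : σ k = k)
    (hx : IsAdmissibleAt u A ρ k x) (hnx : IsAdmissibleAt u A ρ (σ k) (-x)) : -x = x := by
  have hukk : u k k = 0 := by simpa only [hk] using hu.apply_bar k
  have hle : x + x ≤ 0 := by exact_mod_cast hukk ▸ hx.add_self_le
  have hnle : -x + -x ≤ 0 := by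
    have := hnx.add_self_le
    rw [hk, hukk] at this
    exact_mod_cast this
  exact neg_eq_of_add_eq_zero_left (hle.antisymm (by simpa using hnle))

theorem exists_isValuationOn_insert (hu : IsEvenOctagon σ u) (hσ : σ.Involutive) (hA : A.Finite)
    (hσA : Set.MapsTo σ A A) (hρ : IsValuationOn_s10 σ u A ρ) (hk : k ∉ A) :
    ∃ ρ', IsValuationOn_s10 σ u (insert k (insert (σ k) A)) ρ' := by
  obtain ⟨x, hx, hnx⟩ := hu.exists_isAdmissibleAt hσ hA hρ k
  obtain ⟨ρ', hodd, hρ'k, hρ'⟩ := exists_odd_update hσ hρ.apply_bar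
    fun hfix ↦ hu.neg_eq_self_of_isAdmissibleAt hfix hx hnx
  have hρ'σk : ρ' (σ k) = -x := by rw [hodd, hρ'k]
  have hρ'A : ∀ j ∈ A, ρ' j = ρ j := fun j hj ↦
    hρ' j (fun h ↦ hk (h ▸ hj)) fun h ↦ hk (hσ k ▸ hσA (h ▸ hj))
  refine ⟨ρ', hodd, ?_⟩
  rintro i (rfl | rfl | hi) j (rfl | rfl | hj)
  · simpa only [hρ'k] using hx.add_self_le
  · simp [hodd, hu.apply_bar]
  · simpa only [hρ'k, hρ'A j hj] using hx.add_le j hj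
  · simp [hodd, hu.symm (σ j), hu.apply_bar]
  · simpa only [hρ'σk] using hnx.add_self_le
  · simpa only [hρ'σk, hρ'A j hj] using hnx.add_le j hj
  · simpa only [hρ'k, hρ'A i hi, hu.symm i, add_comm (ρ i)] using hx.add_le i hi
  · simpa only [hρ'σk, hρ'A i hi, hu.symm i, add_comm (ρ i)] using hnx.add_le i hi
  · simpa only [hρ'A i hi, hρ'A j hj] using hρ.add_le i hi j hj

theorem exists_isValuationOn_univ [Finite N] (hu : IsEvenOctagon σ u) (hσ : σ.Involutive) :
    ∃ ρ, IsValuationOn_s10 σ u Set.univ ρ := by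
  obtain ⟨A, ⟨hσA, ρ, hρ⟩, hmax⟩ :=
    (Set.toFinite {A | Set.MapsTo σ A A ∧ ∃ ρ, IsValuationOn_s10 σ u A ρ}).exists_maximal
      ⟨∅, Set.mapsTo_empty _ _, 0, by simp, by simp⟩
  suffices A = Set.univ from ⟨ρ, this ▸ hρ⟩
  refine Set.eq_univ_of_forall fun k ↦ by_contra fun hk ↦ hk ?_
  have hmaps : Set.MapsTo σ (insert k (insert (σ k) A)) (insert k (insert (σ k) A)) := by
    rintro i (rfl | rfl | hi)
    · exact .inr (.inl rfl)
    · exact .inl (hσ k)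
    · exact .inr (.inr (hσA hi))
  exact hmax ⟨hmaps, hu.exists_isValuationOn_insert hσ A.toFinite hσA hρ hk⟩
    (fun i hi ↦ .inr (.inr hi)) (.inl rfl)

end IsEvenOctagon

end Octagon

theorem exists_isTightOctagon_of_int_weights {N : Type*} {σ : N → N} (hσ : σ.Involutive)
    {w : N → N → Qinf} (hint : ∀ i j, w i j = ⊤ ∨ ∃ d : ℤ, w i j = ((d : ℚ) : Qinf))
    (hdiag : ∀ i, w i i = 0) (htri : ∀ i j k, w i j ≤ w i k + w k j)
    (hcoh : ∀ i j, w i j = w (σ j) (σ i))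
    (heven : ∀ i, w i (σ i) = ⊤ ∨ ∃ d : ℤ, w i (σ i) = (((2 * d : ℤ) : ℚ) : Qinf)) :
    ∃ u : N → N → WithTop ℤ, IsEvenOctagon σ u ∧
      ∀ i j, w i (σ j) = (u i j).map (Int.castAddHom ℚ) := by
  have hrange : ∀ i j, ∃ c : WithTop ℤ, w i (σ j) = c.map (Int.castAddHom ℚ) := fun i j ↦ by
    rcases hint i (σ j) with h | ⟨d, h⟩
    · exact ⟨⊤, h⟩
    · exact ⟨d, h⟩
  choose u hu using hrange
  have hinj : Function.Injective (WithTop.map (Int.castAddHom ℚ)) :=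
    WithTop.map_injective Int.cast_injective
  refine ⟨u, ⟨fun i j ↦ hinj ?_, fun i ↦ hinj ?_, fun i j k ↦ ?_, fun i ↦ ?_⟩, hu⟩
  · rw [← hu, ← hu, hcoh, hσ]
  · rw [← hu, hσ, hdiag]
    simp
  · have hle := htri i (σ j) (σ k)
    rwa [hu, hu, hu, ← WithTop.map_add, WithTop.map_le_iff _ (by simp)] at hle
  · rcases heven i with h | ⟨d, h⟩
    · exact ⟨⊤, hinj (by rw [← hu, h]; rfl)⟩
    · exact ⟨d, hinj (by rw [← hu, h, ← WithTop.coe_add, ← two_mul]; rfl)⟩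

theorem dominating_tightly_closed_implies_Z_consistent_general {N : Type*} [Finite N] {σ : N → N}
    (hσ : σ.Involutive) {w w' : N → N → Qinf}
    (hint : ∀ i j, w' i j = ⊤ ∨ ∃ d : ℤ, w' i j = ((d : ℚ) : Qinf))
    (hdiag : ∀ i, w' i i = 0) (htri : ∀ i j k, w' i j ≤ w' i k + w' k j)
    (hcoh : ∀ i j, w' i j = w' (σ j) (σ i))
    (heven : ∀ i, w' i (σ i) = ⊤ ∨ ∃ d : ℤ, w' i (σ i) = (((2 * d : ℤ) : ℚ) : Qinf))
    (hle : ∀ i j, w' i j ≤ w i j) :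
    ∃ ρ : N → ℤ, (∀ i, ρ (σ i) = -ρ i) ∧
      ∀ i j, (((ρ i - ρ j : ℤ) : ℚ) : Qinf) ≤ w i j := by
  obtain ⟨u, hu, hwu⟩ := exists_isTightOctagon_of_int_weights hσ hint hdiag htri hcoh heven
  obtain ⟨ρ, hodd, hρ⟩ := hu.exists_isValuationOn_univ hσ
  refine ⟨ρ, hodd, fun i j ↦ le_trans ?_ (hle i j)⟩
  calc
    (((ρ i - ρ j : ℤ) : ℚ) : Qinf)
      = ((ρ i + ρ (σ j) : ℤ) : WithTop ℤ).map (Int.castAddHom ℚ) := by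
        rw [hodd, ← sub_eq_add_neg]; rfl
    _ ≤ (u i (σ j)).map (Int.castAddHom ℚ) :=
        (WithTop.map_le_iff _ (by simp)).2 (hρ i (Set.mem_univ i) (σ j) (Set.mem_univ (σ j)))
    _ = w' i j := by rw [← hwu, hσ]

/-- An integer octagonal graph admitting a tightly closed integer
    octagonal graph below it is ℤ-consistent. -/
theorem dominating_tightly_closed_implies_Z_consistent
    {n : ℕ} (hn : 1 ≤ n) (w : Fin (2 * n) → Fin (2 * n) → Qinf)
    (hoct : Octagonal w) (hint : IntWeights w)
    (hex : ∃ w' : Fin (2 * n) → Fin (2 * n) → Qinf,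
      TightlyClosed w' ∧ GLe w' w) :
    ∃ ρ : Fin (2 * n) → ℤ,
      (∀ i, ρ (bar i) = -ρ i) ∧
      ∀ i j, w i j < ⊤ → (((ρ i - ρ j : ℤ) : ℚ) : Qinf) ≤ w i j := by
  obtain ⟨w', ⟨hw', ⟨⟨-, hcoh⟩, ⟨-, hdiag, htri⟩, -⟩, heven⟩, hle⟩ := hex
  exact (dominating_tightly_closed_implies_Z_consistent_general
    bar_involutive hw' hdiag htri hcoh heven hle).imp fun _ hρ ↦ ⟨hρ.1, fun i j _ ↦ hρ.2 i j⟩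
end

section
/- Let G = (𝒩, w) be an octagonal graph such that the set of strongly closed octagonal graphs w′ with w′ ⊴ w is nonempty, and let w_S be the pointwise supremum of this set. Then w_S is itself a strongly closed octagonal graph (so strong closure is well defined and is the greatest strongly closed octagonal graph below w); moreover the assignment w ↦ w_S is monotone with respect to ⊴, reductive (w_S ⊴ w), and idempotent ((w_S)_S = w_S). -/
/-!
Every condition defining a strongly closed graph other than consistency is a conjunction of
inequalities `f v ≤ g v`, where `f` preserves nonempty suprema and `g` is monotone; such an
inequality passes from the members of a nonempty family to its supremum. For strong coherence `f`
is twice an evaluation map, which preserves suprema because doubling on `ℚ∞` is left adjoint to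
halving. Consistency is even inherited by any graph above a consistent one.
-/

section Order

theorem isLUB_iff_forall_isLUB_image_apply_apply {ι κ α : Type*} [Preorder α]
    {S : Set (ι → κ → α)} {w : ι → κ → α} :
    IsLUB S w ↔ ∀ i j, IsLUB ((fun v => v i j) '' S) (w i j) := by
  simp only [isLUB_pi, Set.image_image, Function.eval]

theorem isLUB_image_le_of_forall_le {α β : Type*} [Preorder α] [Preorder β]
    {S : Set α} {a : α} {f g : α → β} (ha : a ∈ upperBounds S)
    (hf : IsLUB (f '' S) (f a)) (hg : Monotone g) (hfg : ∀ x ∈ S, f x ≤ g x) :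
    f a ≤ g a :=
  hf.2 <| Set.forall_mem_image.2 fun x hx => (hfg x hx).trans (hg (ha hx))

theorem gc_two_mul_half : GaloisConnection (fun x : Qinf => 2 * x) half := by
  intro x y
  induction y using WithTop.recTopCoe with
  | top => exact iff_of_true le_top le_top
  | coe q =>
    induction x using WithTop.recTopCoe with
    | top => simp [half]
    | coe p =>
      have two_mul_coe : (2 : Qinf) * (p : Qinf) = ((2 * p : ℚ) : Qinf) :=
        (WithTop.coe_mul 2 p).symm
      simp only [half, two_mul_coe, WithTop.map_coe, WithTop.coe_le_coe,
        le_div_iff₀' (zero_lt_two' ℚ)]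

end Order

section Graph

variable {N : Type*} {w v : N → N → Qinf} {S : Set (N → N → Qinf)}

theorem pathWeight_mono (hvw : v ≤ w) : ∀ l : List N, pathWeight v l ≤ pathWeight w l
  | [] => le_rfl
  | [_] => le_rfl
  | a :: b :: l => add_le_add (hvw a b) (pathWeight_mono hvw (b :: l))

theorem Consistent.mono (hv : Consistent v) (hvw : v ≤ w) : Consistent w :=
  fun l hl => (hv l hl).trans (pathWeight_mono hvw l)

theorem closedG_of_isLUB (hne : S.Nonempty) (hS : ∀ v ∈ S, ClosedG v) (hw : IsLUB S w) :
    ClosedG w := by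
  have hlub := isLUB_iff_forall_isLUB_image_apply_apply.1 hw
  obtain ⟨v, hv⟩ := hne
  refine ⟨(hS v hv).1.mono (hw.1 hv), fun i => le_antisymm ?_ ?_, fun i j k => ?_⟩
  · exact isLUB_image_le_of_forall_le hw.1 (hlub i i) monotone_const
      fun u hu => ((hS u hu).2.1 i).le
  · exact ((hS v hv).2.1 i).ge.trans (hw.1 hv i i)
  · exact isLUB_image_le_of_forall_le hw.1 (hlub i j)
      (g := fun u => u i k + u k j) (fun _ _ h => add_le_add (h i k) (h k j))
      fun u hu => (hS u hu).2.2 i j k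

end Graph

section Octagonal

variable {n : ℕ} {w v : Fin (2 * n) → Fin (2 * n) → Qinf}
  {S : Set (Fin (2 * n) → Fin (2 * n) → Qinf)}

theorem coherent_of_isLUB (hS : ∀ v ∈ S, Coherent v) (hw : IsLUB S w) : Coherent w := by
  have hlub := isLUB_iff_forall_isLUB_image_apply_apply.1 hw
  intro i j
  have himage : (fun v => v i j) '' S = (fun v => v (bar j) (bar i)) '' S :=
    Set.image_congr fun v hv => hS v hv i j
  exact (hlub i j).unique (himage ▸ hlub (bar j) (bar i))

theorem two_mul_apply_le_of_isLUB
    (hS : ∀ v ∈ S, ∀ i j, 2 * v i j ≤ v i (bar i) + v (bar j) j) (hw : IsLUB S w)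
    (i j : Fin (2 * n)) : 2 * w i j ≤ w i (bar i) + w (bar j) j := by
  have hlub : IsLUB ((fun v => 2 * v i j) '' S) (2 * w i j) := by
    simpa only [Set.image_image] using
      gc_two_mul_half.isLUB_l_image (isLUB_iff_forall_isLUB_image_apply_apply.1 hw i j)
  exact isLUB_image_le_of_forall_le hw.1 hlub
    (g := fun v => v i (bar i) + v (bar j) j)
    (fun _ _ h => add_le_add (h i (bar i)) (h (bar j) j)) fun v hv => hS v hv i j

theorem stronglyClosed_of_isLUB (hne : S.Nonempty) (hS : ∀ v ∈ S, StronglyClosed v)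
    (hw : IsLUB S w) : StronglyClosed w :=
  have hclosed : ClosedG w := closedG_of_isLUB hne (fun v hv => (hS v hv).2.1) hw
  ⟨⟨hclosed.1, coherent_of_isLUB (fun v hv => (hS v hv).1.2) hw⟩, hclosed,
    two_mul_apply_le_of_isLUB (fun v hv => (hS v hv).2.2) hw⟩

/-- The strongly closed octagonal graphs below `w`. The strong closure of `w` is the least upper
bound of this set in the product order, which is the relation `GLe`. -/
def stronglyClosedBelow (w : Fin (2 * n) → Fin (2 * n) → Qinf) :
    Set (Fin (2 * n) → Fin (2 * n) → Qinf) :=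
  {v | StronglyClosed v ∧ GLe v w}

theorem isLUB_stronglyClosedBelow_iff :
    IsLUB (stronglyClosedBelow w) v ↔ ∀ i j, IsLUB {q : Qinf |
      ∃ u : Fin (2 * n) → Fin (2 * n) → Qinf, StronglyClosed u ∧ GLe u w ∧ q = u i j}
      (v i j) := by
  simp only [isLUB_iff_forall_isLUB_image_apply_apply, stronglyClosedBelow, Set.image,
    Set.mem_ofPred_eq, and_assoc, eq_comm]

theorem stronglyClosedBelow_mono {w₁ w₂ : Fin (2 * n) → Fin (2 * n) → Qinf} (h : GLe w₁ w₂) :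
    stronglyClosedBelow w₁ ⊆ stronglyClosedBelow w₂ :=
  fun _ hu => ⟨hu.1, fun i j => (hu.2 i j).trans (h i j)⟩

theorem isGreatest_stronglyClosedBelow_of_isLUB (hne : (stronglyClosedBelow w).Nonempty)
    (hv : IsLUB (stronglyClosedBelow w) v) : IsGreatest (stronglyClosedBelow w) v :=
  ⟨⟨stronglyClosed_of_isLUB hne (fun _ hu => hu.1) hv, hv.2 fun _ hu => hu.2⟩, hv.1⟩

theorem StronglyClosed.isGreatest_stronglyClosedBelow (hw : StronglyClosed w) :
    IsGreatest (stronglyClosedBelow w) w :=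
  ⟨⟨hw, fun _ _ => le_rfl⟩, fun _ hu => hu.2⟩

theorem strong_closure_kernel_operator_general {wS : Fin (2 * n) → Fin (2 * n) → Qinf}
    (hne : (stronglyClosedBelow w).Nonempty) (hlub : IsLUB (stronglyClosedBelow w) wS) :
    IsGreatest (stronglyClosedBelow w) wS ∧
      (∀ w₂ wS₂ : Fin (2 * n) → Fin (2 * n) → Qinf,
        IsLUB (stronglyClosedBelow w₂) wS₂ → GLe w w₂ → GLe wS wS₂) ∧
      IsLUB (stronglyClosedBelow wS) wS := by
  have hgreatest := isGreatest_stronglyClosedBelow_of_isLUB hne hlub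
  exact ⟨hgreatest, fun _ _ hlub₂ hle => hlub.mono hlub₂ (stronglyClosedBelow_mono hle),
    hgreatest.1.1.isGreatest_stronglyClosedBelow.isLUB⟩

end Octagonal

/-- Strong closure is well defined (the pointwise supremum of all
    strongly closed octagonal graphs below w is itself strongly closed, hence
    the greatest such graph), and the strong closure operator is monotone,
    reductive and idempotent. -/
theorem strong_closure_kernel_operator
    {n : ℕ} (hn : 1 ≤ n) (w : Fin (2 * n) → Fin (2 * n) → Qinf)
    (hoct : Octagonal w)
    (hne : ∃ w' : Fin (2 * n) → Fin (2 * n) → Qinf,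
      StronglyClosed w' ∧ GLe w' w)
    (wS : Fin (2 * n) → Fin (2 * n) → Qinf)
    (hlub : ∀ i j, IsLUB
      {q : Qinf | ∃ w' : Fin (2 * n) → Fin (2 * n) → Qinf,
        StronglyClosed w' ∧ GLe w' w ∧ q = w' i j} (wS i j)) :
    (StronglyClosed wS ∧ GLe wS w ∧
      ∀ w' : Fin (2 * n) → Fin (2 * n) → Qinf,
        StronglyClosed w' → GLe w' w → GLe w' wS) ∧
    (∀ w₂ wS₂ : Fin (2 * n) → Fin (2 * n) → Qinf,
      Octagonal w₂ →
      (∀ i j, IsLUB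
        {q : Qinf | ∃ w' : Fin (2 * n) → Fin (2 * n) → Qinf,
          StronglyClosed w' ∧ GLe w' w₂ ∧ q = w' i j} (wS₂ i j)) →
      GLe w w₂ → GLe wS wS₂) ∧
    (∀ i j, IsLUB
      {q : Qinf | ∃ w' : Fin (2 * n) → Fin (2 * n) → Qinf,
        StronglyClosed w' ∧ GLe w' wS ∧ q = w' i j} (wS i j)) := by
  simp only [← isLUB_stronglyClosedBelow_iff] at hlub ⊢
  obtain ⟨hgreatest, hmono, hidem⟩ := strong_closure_kernel_operator_general hne hlub
  exact ⟨⟨hgreatest.1.1, hgreatest.1.2, fun _ hv hvw => hgreatest.2 ⟨hv, hvw⟩⟩,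
    fun w₂ wS₂ _ => hmono w₂ wS₂, hidem⟩
end
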